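/- For every γ ∈ {0, 1, 3, 5, 7, 8, 9, 10} and δ = 10 − γ, the complete graph K₂₁ admits a decomposition of its edge set into γ C₃-factors and δ C₇-factors. -/

import Mathlib

open SimpleGraph

/-- `F` is an `H`-factor (of the complete graph on its vertex type, or of any graph
containing it): every connected component of `F`, viewed as an induced subgraph,
is isomorphic to `H`.  Since `F` is a graph on all of `V`, it is automatically spanning. -/
def IsHFactor {V W : Type*} (H : SimpleGraph W) (F : SimpleGraph V) : Prop :=
  ∀ c : F.ConnectedComponent, Nonempty (F.induce c.supp ≃g H)

/-- A `C_k`-factor: a spanning subgraph each of whose connected components is a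
cycle of length `k` (in particular it is 2-regular). -/
def IsCycleFactor {V : Type*} (k : ℕ) (F : SimpleGraph V) : Prop :=
  IsHFactor (SimpleGraph.cycleGraph k) F

/-- `(G; C_m^r, C_k^s)`: a partition of the edge set of `G` into `r` `C_m`-factors
and `s` `C_k`-factors. -/
def IsCycleDecomp {V : Type*} (G : SimpleGraph V) (m k r s : ℕ) : Prop :=
  ∃ F : Fin r ⊕ Fin s → SimpleGraph V,
    (∀ i, F i ≤ G) ∧
    (∀ e ∈ G.edgeSet, ∃! i, e ∈ (F i).edgeSet) ∧
    (∀ i : Fin r, IsCycleFactor m (F (Sum.inl i))) ∧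
    (∀ j : Fin s, IsCycleFactor k (F (Sum.inr j)))

open Equiv Function

/-!
A permutation all of whose cycles have length `k ≥ 3` traces out a `C_k`-factor, so a decomposition
is a family of permutations that together join every two vertices exactly once. If the family is
closed under conjugation by a permutation `ρ`, this only has to be verified at one vertex of each
cycle of `ρ` (the method of differences).

For `γ ≠ 5` the vertices are `ZMod 3 × ZMod 7` and `ρ` is `(s, x) ↦ (s, x + 1)`. Three of the ten
factors are `ρ`-invariant: they come from permutations `(s, x) ↦ (s + t, x + 2 ^ s * a)`, whose
cycles are triangles for `t = 1` and heptagons for `t = 0`. The other seven are the translates of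
one starter. For `γ = 5` the vertices are a point at infinity, fixed by `ρ`, and `Fin 4 × ZMod 5`;
the factors are the five translates of a `C₃` starter and of a `C₇` starter. All starters were found
by computer search.
-/

section FunctionalGraph

variable {V : Type*} {f : V → V} {k : ℕ}

/-- The functional graph of `f`, with an edge joining `v` to `f v` for every `v` that `f` moves. -/
def functionalGraph (f : V → V) : SimpleGraph V :=
  SimpleGraph.fromRel fun u v => f u = v

theorem functionalGraph_adj {u v : V} :
    (functionalGraph f).Adj u v ↔ u ≠ v ∧ (f u = v ∨ f v = u) :=
  Iff.rfl

instance [DecidableEq V] : DecidableRel (functionalGraph f).Adj :=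
  fun _ _ => decidable_of_iff _ functionalGraph_adj.symm

theorem cycleGraph_adj_iff_add_one [NeZero k] {i j : Fin k} :
    (cycleGraph k).Adj i j ↔ i ≠ j ∧ (i + 1 = j ∨ j + 1 = i) := by
  obtain ⟨n, rfl⟩ := Nat.exists_eq_add_one_of_ne_zero (NeZero.ne k)
  rw [cycleGraph_eq_circulantGraph, circulantGraph, fromRel_adj, or_comm]
  simp only [Set.mem_singleton_iff, sub_eq_iff_eq_add', eq_comm]

theorem iterate_val_add_one [NeZero k] {w : V} (hw : IsPeriodicPt f k w) (i : Fin k) :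
    f^[(i + 1 : Fin k)] w = f (f^[i] w) := by
  rw [Fin.val_add, hw.iterate_mod_apply, Fin.val_one', add_comm, iterate_add_apply,
    (hw.apply_iterate i).iterate_mod_apply, iterate_one]

theorem iterate_val_injective {w : V} (hw : minimalPeriod f w = k) :
    Injective fun i : Fin k => f^[i] w := by
  subst hw
  exact fun i j hij => Fin.ext (iterate_injOn_Iio_minimalPeriod i.2 j.2 hij)

theorem functionalGraph_adj_iterate_iff [NeZero k] {w : V} (hw : minimalPeriod f w = k)
    {i j : Fin k} :
    (functionalGraph f).Adj (f^[i] w) (f^[j] w) ↔ (cycleGraph k).Adj i j := by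
  have hper : IsPeriodicPt f k w := hw ▸ isPeriodicPt_minimalPeriod f w
  rw [functionalGraph_adj, cycleGraph_adj_iff_add_one, ← iterate_val_add_one hper,
    ← iterate_val_add_one hper]
  simp only [ne_eq, (iterate_val_injective hw).eq_iff]

theorem functionalGraph_reachable_iff [NeZero k] (hf : ∀ v, minimalPeriod f v = k) {w v : V} :
    (functionalGraph f).Reachable w v ↔ ∃ i : Fin k, f^[i] w = v := by
  have hper (v : V) : IsPeriodicPt f k v := hf v ▸ isPeriodicPt_minimalPeriod f v
  have hinj : Injective f := fun u v huv =>
    (bijOn_periodicPts f).injOn ⟨k, NeZero.pos k, hper u⟩ ⟨k, NeZero.pos k, hper v⟩ huv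
  constructor
  · intro h
    rw [reachable_iff_reflTransGen] at h
    induction h with
    | refl => exact ⟨0, rfl⟩
    | tail _ huv ih =>
      obtain ⟨i, rfl⟩ := ih
      rcases huv.2 with rfl | hv
      · exact ⟨i + 1, iterate_val_add_one (hper w) i⟩
      · refine ⟨i - 1, hinj ?_⟩
        rw [← iterate_val_add_one (hper w), sub_add_cancel, hv]
  · rintro ⟨i, rfl⟩
    exact (cycleGraph_preconnected 0 i).map
      ⟨fun j : Fin k => f^[j] w, (functionalGraph_adj_iterate_iff (hf w)).2⟩

theorem isCycleFactor_functionalGraph [NeZero k] (hf : ∀ v, minimalPeriod f v = k) :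
    IsCycleFactor k (functionalGraph f) := by
  intro c
  induction c using SimpleGraph.ConnectedComponent.ind with
  | _ w =>
  have hmem (v : V) : v ∈ ((functionalGraph f).connectedComponentMk w).supp ↔
      ∃ i : Fin k, f^[i] w = v := by
    rw [ConnectedComponent.mem_supp_iff, ConnectedComponent.eq, reachable_comm,
      functionalGraph_reachable_iff hf]
  let e : Fin k ≃ ((functionalGraph f).connectedComponentMk w).supp :=
    (Equiv.ofInjective _ (iterate_val_injective (hf w))).trans
      (Equiv.setCongr (Set.ext fun v => (hmem v).symm))
  exact ⟨RelIso.symm ⟨e, functionalGraph_adj_iterate_iff (hf w)⟩⟩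

end FunctionalGraph

section CoversOnceAt

variable {V W I J ι κ ι' κ' : Type*} {f : I → Perm V} {g : J → Perm V} {ρ : Perm V}
  {k m n : ℕ} {u v : V}

theorem functionalGraph_permCongr_adj (e : V ≃ W) (p : Perm V) :
    (functionalGraph (e.permCongr p)).Adj (e u) (e v) ↔ (functionalGraph p).Adj u v := by
  simp [functionalGraph_adj]

theorem minimalPeriod_permCongr (e : V ≃ W) (p : Perm V) (v : V) :
    minimalPeriod (e.permCongr p) (e v) = minimalPeriod p v := by
  have hsemi : Semiconj e p (e.permCongr p) := fun v => by simp
  refine minimalPeriod_eq_minimalPeriod_iff.2 fun n => ?_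
  rw [IsPeriodicPt, IsFixedPt, ← hsemi.iterate_right n, e.apply_eq_iff_eq, IsPeriodicPt, IsFixedPt]

/-- Every edge of the complete graph at `u` lies in the functional graph of exactly one member of
the family `f`. -/
def CoversOnceAt (f : I → Perm V) (u : V) : Prop :=
  ∀ v, u ≠ v → ∃! i, (functionalGraph (f i)).Adj u v

instance [Fintype V] [DecidableEq V] [Fintype I] (f : I → Perm V) (u : V) :
    Decidable (CoversOnceAt f u) :=
  decidable_of_iff (∀ v, u ≠ v → Finset.card {i | (functionalGraph (f i)).Adj u v} = 1)
    (forall₂_congr fun _ _ => (Fintype.existsUnique_iff_card_one _).symm)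

theorem coversOnceAt_comp_equiv (σ : J ≃ I) :
    CoversOnceAt (f ∘ σ) u ↔ CoversOnceAt f u :=
  forall₂_congr fun v _ =>
    σ.existsUnique_congr_right (q := fun i => (functionalGraph (f i)).Adj u v)

theorem coversOnceAt_permCongr (e : V ≃ W) :
    CoversOnceAt (fun i => e.permCongr (f i)) (e u) ↔ CoversOnceAt f u := by
  simp only [CoversOnceAt, ← e.forall_congr_right, functionalGraph_permCongr_adj, ne_eq,
    e.apply_eq_iff_eq]

theorem isCycleDecomp_top_of_coversOnceAt [Fintype I] [Fintype J] [NeZero m] [NeZero k] (e : V ≃ W)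
    (hf : ∀ i v, minimalPeriod (f i) v = m) (hg : ∀ j v, minimalPeriod (g j) v = k)
    (hfg : ∀ u, CoversOnceAt (Sum.elim f g) u) :
    IsCycleDecomp (⊤ : SimpleGraph W) m k (Fintype.card I) (Fintype.card J) := by
  let σ := Equiv.sumCongr (Fintype.equivFin I).symm (Fintype.equivFin J).symm
  let h := fun i => e.permCongr (Sum.elim f g (σ i))
  have hcovers (u : V) : CoversOnceAt h (e u) :=
    (coversOnceAt_permCongr e).2 ((coversOnceAt_comp_equiv σ).2 (hfg u))
  refine ⟨fun i => functionalGraph (h i), fun _ => le_top, ?_, fun i => ?_, fun j => ?_⟩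
  · exact Sym2.ind (e.surjective.forall.2 fun u v huv => hcovers u v huv)
  · exact isCycleFactor_functionalGraph <| e.surjective.forall.2 fun v =>
      (minimalPeriod_permCongr e _ v).trans (hf _ v)
  · exact isCycleFactor_functionalGraph <| e.surjective.forall.2 fun v =>
      (minimalPeriod_permCongr e _ v).trans (hg _ v)

/-- Conjugation by `ρ` permutes the members of the family `f`. -/
def IsConjStable (ρ : Perm V) (f : I → Perm V) : Prop :=
  ∃ σ : Perm I, ∀ i, f (σ i) = ρ.permCongr (f i)

theorem IsConjStable.sumElim (hf : IsConjStable ρ f) (hg : IsConjStable ρ g) :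
    IsConjStable ρ (Sum.elim f g) := by
  obtain ⟨σ, hσ⟩ := hf
  obtain ⟨τ, hτ⟩ := hg
  exact ⟨Equiv.sumCongr σ τ, Sum.rec hσ hτ⟩

theorem IsConjStable.coversOnceAt_apply (hf : IsConjStable ρ f) (hu : CoversOnceAt f u) :
    CoversOnceAt f (ρ u) := by
  obtain ⟨σ, hσ⟩ := hf
  rw [← coversOnceAt_comp_equiv σ, funext hσ (f := f ∘ σ)]
  exact (coversOnceAt_permCongr ρ).2 hu

theorem IsConjStable.coversOnceAt_of_sameCycle [Finite V] (hf : IsConjStable ρ f)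
    (huv : ρ.SameCycle u v) (hu : CoversOnceAt f u) : CoversOnceAt f v := by
  obtain ⟨n, rfl⟩ := huv.exists_nat_pow_eq
  clear huv
  induction n with
  | zero => exact hu
  | succ n ih =>
    rw [pow_succ', Perm.mul_apply]
    exact hf.coversOnceAt_apply ih

/-- The family consisting of the permutations `P i`, each taken once, and of the `n` conjugates of
each starter `Q j` by the powers of `ρ`. -/
def develop (ρ : Perm V) (n : ℕ) (P : ι → Perm V) (Q : κ → Perm V) : ι ⊕ κ × Fin n → Perm V :=
  Sum.elim P fun q => (ρ ^ (q.2 : ℕ)).permCongr (Q q.1)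

variable {P : ι → Perm V} {Q : κ → Perm V}

theorem isConjStable_develop [NeZero n] (hρ : ρ ^ n = 1) (hP : ∀ i, Commute ρ (P i)) :
    IsConjStable ρ (develop ρ n P Q) := by
  refine ⟨Equiv.sumCongr (Equiv.refl ι) (Equiv.prodCongr (Equiv.refl κ) (Equiv.addRight 1)), ?_⟩
  rintro (i | ⟨j, a⟩)
  · rw [permCongr_eq_mul]
    exact (mul_inv_eq_of_eq_mul (hP i).eq).symm
  · have hpow : ρ ^ ((a + 1 : Fin n) : ℕ) = ρ * ρ ^ (a : ℕ) := by
      rw [Fin.val_add, ← pow_eq_pow_mod _ hρ, pow_add, Fin.val_one', ← pow_eq_pow_mod _ hρ,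
        pow_one, (Commute.self_pow ρ a).eq]
    simp [develop, hpow, permCongr_eq_mul, mul_assoc]

theorem minimalPeriod_develop (hP : ∀ i v, minimalPeriod (P i) v = k)
    (hQ : ∀ j v, minimalPeriod (Q j) v = k) :
    ∀ i v, minimalPeriod (develop ρ n P Q i) v = k
  | .inl i, v => hP i v
  | .inr (j, a), v => by
    obtain ⟨w, rfl⟩ := (ρ ^ (a : ℕ)).surjective v
    exact (minimalPeriod_permCongr _ _ w).trans (hQ j w)

theorem isCycleDecomp_top_of_develop [Finite V] [Fintype ι] [Fintype κ] [Fintype ι'] [Fintype κ']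
    [NeZero m] [NeZero k] [NeZero n] {P' : ι' → Perm V} {Q' : κ' → Perm V} (e : V ≃ W)
    (hρ : ρ ^ n = 1) (hP : ∀ i, Commute ρ (P i)) (hP' : ∀ i, Commute ρ (P' i))
    (hPm : ∀ i v, minimalPeriod (P i) v = m) (hQm : ∀ j v, minimalPeriod (Q j) v = m)
    (hPk : ∀ i v, minimalPeriod (P' i) v = k) (hQk : ∀ j v, minimalPeriod (Q' j) v = k)
    (hcovers : ∀ v, ∃ u, ρ.SameCycle u v ∧
      CoversOnceAt (Sum.elim (develop ρ n P Q) (develop ρ n P' Q')) u) :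
    IsCycleDecomp (⊤ : SimpleGraph W) m k
      (Fintype.card ι + Fintype.card κ * n) (Fintype.card ι' + Fintype.card κ' * n) := by
  have hstable := (isConjStable_develop (Q := Q) hρ hP).sumElim
    (isConjStable_develop (Q := Q') hρ hP')
  have hdecomp := isCycleDecomp_top_of_coversOnceAt e
    (minimalPeriod_develop hPm hQm) (minimalPeriod_develop hPk hQk) fun v =>
      let ⟨_, huv, hu⟩ := hcovers v
      hstable.coversOnceAt_of_sameCycle huv hu
  simpa only [Fintype.card_sum, Fintype.card_prod, Fintype.card_fin] using hdecomp

end CoversOnceAt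

section Translation

variable {S : Type*} {n : ℕ}

/-- The translation `(s, x) ↦ (s, x + 1)`, whose cycles are the columns `{s} × ZMod n`. -/
def translation (S : Type*) (n : ℕ) : Perm (S × ZMod n) :=
  Equiv.prodCongr (Equiv.refl S) (Equiv.addRight 1)

theorem translation_pow_apply (k : ℕ) (s : S) (x : ZMod n) :
    (translation S n ^ k) (s, x) = (s, x + k) := by
  induction k with
  | zero => simp
  | succ k ih =>
    rw [pow_succ', Perm.mul_apply, ih]
    simp [translation, add_assoc]

theorem translation_pow_self (S : Type*) (n : ℕ) : translation S n ^ n = 1 := by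
  ext1 ⟨s, x⟩
  simp [translation_pow_apply]

theorem translation_sameCycle [NeZero n] (s : S) (x : ZMod n) :
    (translation S n).SameCycle (s, 0) (s, x) :=
  ⟨x.val, by rw [zpow_natCast, translation_pow_apply]; simp⟩

end Translation

instance fact_prime_seven : Fact (Nat.Prime 7) := ⟨by norm_num⟩

/-- The product of the cyclic permutations given by the lists `cs`, which are meant to be
disjoint. -/
def ofCycles {V : Type*} [DecidableEq V] (cs : List (List V)) : Perm V :=
  (cs.map List.formPerm).prod

section TwistedShift

/-- The permutation `(s, x) ↦ (s + t, x + 2 ^ s * a)` of `ZMod 3 × ZMod 7`, where `2 ^ s` makes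
sense because `2` has order three modulo seven. -/
def twistedShift (t : ZMod 3) (a : ZMod 7) : Perm (ZMod 3 × ZMod 7) :=
  Equiv.prodShear (Equiv.addRight t) fun s => Equiv.addRight (2 ^ s.val * a)

theorem commute_translation_twistedShift (t : ZMod 3) (a : ZMod 7) :
    Commute (translation (ZMod 3) 7) (twistedShift t a) := by
  ext1 ⟨s, x⟩
  simp [translation, twistedShift, add_right_comm]

-- Three steps add `(1 + 2 + 4) * a = 0`.
theorem minimalPeriod_twistedShift_one (a : ZMod 7) (v : ZMod 3 × ZMod 7) :
    minimalPeriod (twistedShift 1 a) v = 3 := by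
  rw [minimalPeriod_eq_prime_iff]
  revert a v
  decide +kernel

theorem minimalPeriod_twistedShift_zero {a : ZMod 7} (ha : a ≠ 0) (v : ZMod 3 × ZMod 7) :
    minimalPeriod (twistedShift 0 a) v = 7 := by
  rw [minimalPeriod_eq_prime_iff]
  revert a v
  decide +kernel

theorem isCycleDecomp_top_of_twistedShift {p q m n : ℕ} {a : Fin p → ZMod 7} {d : Fin q → ZMod 7}
    {σ : Fin m → Perm (ZMod 3 × ZMod 7)} {τ : Fin n → Perm (ZMod 3 × ZMod 7)}
    (hd : ∀ i, d i ≠ 0)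
    (hσ : ∀ i v, IsPeriodicPt (σ i) 3 v ∧ ¬IsFixedPt (σ i) v)
    (hτ : ∀ i v, IsPeriodicPt (τ i) 7 v ∧ ¬IsFixedPt (τ i) v)
    (hcovers : ∀ s, CoversOnceAt
      (Sum.elim (develop (translation (ZMod 3) 7) 7 (twistedShift 1 ∘ a) σ)
        (develop (translation (ZMod 3) 7) 7 (twistedShift 0 ∘ d) τ)) (s, 0)) :
    IsCycleDecomp (⊤ : SimpleGraph (Fin 21)) 3 7 (p + m * 7) (q + n * 7) := by
  have hdecomp := isCycleDecomp_top_of_develop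
    (Fintype.equivFinOfCardEq (n := 21) (by simp)) (translation_pow_self (ZMod 3) 7)
    (fun i => commute_translation_twistedShift 1 (a i))
    (fun i => commute_translation_twistedShift 0 (d i))
    (fun i => minimalPeriod_twistedShift_one (a i))
    (fun i v => minimalPeriod_eq_prime_iff.2 (hσ i v))
    (fun i => minimalPeriod_twistedShift_zero (hd i))
    (fun i v => minimalPeriod_eq_prime_iff.2 (hτ i v))
    fun v => ⟨(v.1, 0), translation_sameCycle v.1 v.2, hcovers v.1⟩
  simpa only [Fintype.card_fin] using hdecomp

/-- The images of the cycle `c` under the powers of the multiplier `(s, x) ↦ (s + 1, 2 * x)`, which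
has order three. -/
def multiplierOrbit (c : List (ZMod 3 × ZMod 7)) : List (List (ZMod 3 × ZMod 7)) :=
  let μ : ZMod 3 × ZMod 7 → ZMod 3 × ZMod 7 := fun v => (v.1 + 1, 2 * v.2)
  [c, c.map μ, c.map μ^[2]]

/-- A starter whose cycles are the triangle `(0, 0), (1, 0), (2, 0)`, which the multiplier
preserves, and the images of the triangles `t` and `u` under its powers. -/
def triangleStarter (t u : List (ZMod 3 × ZMod 7)) : Perm (ZMod 3 × ZMod 7) :=
  ofCycles ([(0, 0), (1, 0), (2, 0)] :: multiplierOrbit t ++ multiplierOrbit u)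

/-- A starter whose cycles are the images of the heptagon `c` under the powers of the multiplier. -/
def heptagonStarter (c : List (ZMod 3 × ZMod 7)) : Perm (ZMod 3 × ZMod 7) :=
  ofCycles (multiplierOrbit c)

theorem isCycleDecomp_zero_ten : IsCycleDecomp (⊤ : SimpleGraph (Fin 21)) 3 7 0 10 :=
  isCycleDecomp_top_of_twistedShift (a := ![]) (d := ![1, 2, 3]) (σ := ![])
    (τ := ![heptagonStarter [(0, 0), (1, 1), (2, 1), (0, 6), (1, 3), (0, 1), (1, 6)]])
    (by decide) (by decide) (by decide +kernel) (by decide +kernel)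

theorem isCycleDecomp_one_nine : IsCycleDecomp (⊤ : SimpleGraph (Fin 21)) 3 7 1 9 :=
  isCycleDecomp_top_of_twistedShift (a := ![1]) (d := ![1, 2]) (σ := ![])
    (τ := ![heptagonStarter [(0, 0), (2, 1), (0, 1), (2, 3), (0, 5), (2, 2), (0, 3)]])
    (by decide) (by decide) (by decide +kernel) (by decide +kernel)

theorem isCycleDecomp_three_seven : IsCycleDecomp (⊤ : SimpleGraph (Fin 21)) 3 7 3 7 :=
  isCycleDecomp_top_of_twistedShift (a := ![1, 2, 4]) (d := ![]) (σ := ![])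
    (τ := ![heptagonStarter [(0, 0), (0, 1), (2, 2), (1, 4), (2, 3), (2, 5), (0, 5)]])
    (by decide) (by decide) (by decide +kernel) (by decide +kernel)

theorem isCycleDecomp_seven_three : IsCycleDecomp (⊤ : SimpleGraph (Fin 21)) 3 7 7 3 :=
  isCycleDecomp_top_of_twistedShift (a := ![]) (d := ![1, 2, 3]) (τ := ![])
    (σ := ![triangleStarter [(0, 1), (1, 4), (2, 2)] [(0, 3), (2, 6), (1, 5)]])
    (by decide) (by decide +kernel) (by decide) (by decide +kernel)

theorem isCycleDecomp_eight_two : IsCycleDecomp (⊤ : SimpleGraph (Fin 21)) 3 7 8 2 :=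
  isCycleDecomp_top_of_twistedShift (a := ![1]) (d := ![1, 2]) (τ := ![])
    (σ := ![triangleStarter [(0, 1), (1, 6), (0, 4)] [(0, 2), (2, 6), (1, 5)]])
    (by decide) (by decide +kernel) (by decide) (by decide +kernel)

theorem isCycleDecomp_nine_one : IsCycleDecomp (⊤ : SimpleGraph (Fin 21)) 3 7 9 1 :=
  isCycleDecomp_top_of_twistedShift (a := ![1, 2]) (d := ![1]) (τ := ![])
    (σ := ![triangleStarter [(0, 1), (1, 6), (1, 5)] [(0, 2), (0, 4), (2, 6)]])
    (by decide) (by decide +kernel) (by decide) (by decide +kernel)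

theorem isCycleDecomp_ten_zero : IsCycleDecomp (⊤ : SimpleGraph (Fin 21)) 3 7 10 0 :=
  isCycleDecomp_top_of_twistedShift (a := ![1, 2, 4]) (d := ![]) (τ := ![])
    (σ := ![triangleStarter [(0, 1), (1, 4), (2, 2)] [(0, 3), (0, 5), (0, 6)]])
    (by decide) (by decide +kernel) (by decide) (by decide +kernel)

end TwistedShift

section PointAtInfinity

variable {V : Type*} {ρ : Perm V} {u v : V}

theorem optionCongr_pow (ρ : Perm V) (n : ℕ) : optionCongr ρ ^ n = optionCongr (ρ ^ n) := by
  induction n with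
  | zero => exact optionCongr_one.symm
  | succ n ih =>
    rw [pow_succ, ih, pow_succ, Perm.mul_def, Perm.mul_def, optionCongr_trans]

theorem sameCycle_optionCongr_some [Finite V] (h : ρ.SameCycle u v) :
    Perm.SameCycle (optionCongr ρ) (some u) (some v) := by
  obtain ⟨n, rfl⟩ := h.exists_nat_pow_eq
  exact ⟨n, by rw [zpow_natCast, optionCongr_pow, optionCongr_apply, Option.map_some]⟩

/-- The permutation of `V` with a point at infinity `none` adjoined, whose cycles are
`none :: c` and the lists in `cs`. -/
def ofCyclesInfinity [DecidableEq V] (c : List V) (cs : List (List V)) : Perm (Option V) :=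
  ofCycles ((none :: c.map some) :: cs.map (List.map some))

theorem isCycleDecomp_top_of_optionCongr_translation {S W κ κ' : Type*} [Finite S] [Fintype κ]
    [Fintype κ'] {m k n : ℕ} [NeZero m] [NeZero k] [NeZero n]
    {σ : κ → Perm (Option (S × ZMod n))} {τ : κ' → Perm (Option (S × ZMod n))}
    (e : Option (S × ZMod n) ≃ W)
    (hσ : ∀ i v, minimalPeriod (σ i) v = m) (hτ : ∀ j v, minimalPeriod (τ j) v = k)
    (hcovers : ∀ u ∈ insert none (Set.range fun s => some (s, 0)),
      CoversOnceAt (Sum.elim (develop (optionCongr (translation S n)) n Empty.elim σ)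
        (develop (optionCongr (translation S n)) n Empty.elim τ)) u) :
    IsCycleDecomp (⊤ : SimpleGraph W) m k (Fintype.card κ * n) (Fintype.card κ' * n) := by
  have hpow : (optionCongr (translation S n) : Perm (Option (S × ZMod n))) ^ n = 1 := by
    rw [optionCongr_pow, translation_pow_self, optionCongr_one]
  have hdecomp := isCycleDecomp_top_of_develop e hpow nofun nofun nofun hσ nofun hτ fun
    | none => ⟨none, .refl _ _, hcovers none (.inl rfl)⟩
    | some (s, x) => ⟨some (s, 0), sameCycle_optionCongr_some (translation_sameCycle s x),
        hcovers _ (.inr ⟨s, rfl⟩)⟩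
  simpa only [Fintype.card_empty, zero_add] using hdecomp

/-- The starter of the five `C₃`-factors in the decomposition with `γ = 5`. -/
def infinityTriangleStarter : Perm (Option (Fin 4 × ZMod 5)) :=
  ofCyclesInfinity [(0, 2), (3, 2)]
    [[(0, 0), (2, 0), (2, 2)], [(2, 1), (1, 3), (3, 4)],
      [(2, 3), (3, 0), (3, 3)], [(2, 4), (1, 2), (1, 4)],
      [(3, 1), (0, 3), (1, 1)], [(0, 1), (0, 4), (1, 0)]]

/-- The starter of the five `C₇`-factors in the decomposition with `γ = 5`. -/
def infinityHeptagonStarter : Perm (Option (Fin 4 × ZMod 5)) :=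
  ofCyclesInfinity [(1, 4), (3, 3), (0, 4), (0, 0), (2, 4), (2, 0)]
    [[(0, 2), (1, 2), (2, 1), (0, 3), (3, 0), (3, 4), (2, 3)],
      [(0, 1), (1, 3), (3, 1), (2, 2), (1, 1), (1, 0), (3, 2)]]

theorem minimalPeriod_infinityTriangleStarter (v : Option (Fin 4 × ZMod 5)) :
    minimalPeriod infinityTriangleStarter v = 3 := by
  rw [minimalPeriod_eq_prime_iff]
  revert v
  decide +kernel

theorem minimalPeriod_infinityHeptagonStarter (v : Option (Fin 4 × ZMod 5)) :
    minimalPeriod infinityHeptagonStarter v = 7 := by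
  rw [minimalPeriod_eq_prime_iff]
  revert v
  decide +kernel

theorem isCycleDecomp_five_five : IsCycleDecomp (⊤ : SimpleGraph (Fin 21)) 3 7 5 5 :=
  isCycleDecomp_top_of_optionCongr_translation (κ := Unit) (κ' := Unit)
    (Fintype.equivFinOfCardEq (by simp))
    (fun _ => minimalPeriod_infinityTriangleStarter)
    (fun _ => minimalPeriod_infinityHeptagonStarter)
    (by simp only [Set.forall_mem_insert, Set.forall_mem_range]; decide +kernel)

end PointAtInfinity

/-- Lemma 3.4: `(K₂₁; C₃^γ, C₇^δ)` exists for `γ ∈ {0,1,3,5,7,8,9,10}` with `γ + δ = 10`. -/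
theorem K21_cycle_decomp (γ δ : ℕ) (hγ : γ ∈ ({0, 1, 3, 5, 7, 8, 9, 10} : Set ℕ))
    (hγδ : γ + δ = 10) :
    IsCycleDecomp (⊤ : SimpleGraph (Fin 21)) 3 7 γ δ := by
  obtain rfl : δ = 10 - γ := by omega
  rcases hγ with rfl | rfl | rfl | rfl | rfl | rfl | rfl | rfl
  · exact isCycleDecomp_zero_ten
  · exact isCycleDecomp_one_nine
  · exact isCycleDecomp_three_seven
  · exact isCycleDecomp_five_five
  · exact isCycleDecomp_seven_three
  · exact isCycleDecomp_eight_two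
  · exact isCycleDecomp_nine_one
  · exact isCycleDecomp_ten_zero
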